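/- Let p be a nonzero polynomial with integer coefficients, and let α be an irrational real number with p(α) = 0, p'(α) ≠ 0, and p''(α) ≠ 0. Then there exist a rational number x₀ and a real constant K > 0 such that the Newton–Raphson sequence x_{i+1} = x_i − p(x_i)/p'(x_i) starting from x₀ is well defined for all i, and for every integer n ≥ 1, taking i(n) = ⌈K·log₂(n+1)⌉ one has ⌊2^n · x_{i(n)}⌋ = ⌊2^n · α⌋; in particular, the n-th bit of the rational number x_{i(n)} equals the n-th bit of α. -/

import Mathlib

open Polynomial

/-!
Near a simple root `α` the Newton map squares the error up to a constant factor, so for every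
`ρ > 0` and every starting point close enough to `α` the error after `i` steps is at most
`ρ ^ 2 ^ i`. By Liouville's theorem, the multiples of `b⁻ⁿ` keep a distance of at least
`c * b ^ (-n * d)` from `α`, where `d` is the degree of `p`; hence an approximation of `α` with a
smaller error has the same first `n` digits in base `b`. If `ρ < min c b⁻¹`, it suffices that
`2 ^ i ≥ 1 + n * d`, and since `1 + n * d ≤ (n + 1) ^ d` this holds for `i ≥ d * log₂ (n + 1)`.
-/

open Filter Topology Asymptotics

section Iteration

variable {X : Type*} [PseudoMetricSpace X] {f : X → X} {a : X}

theorem eventually_forall_iterate_of_eventually_dist_le {P : X → Prop}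
    (hf : ∀ᶠ y in 𝓝 a, dist (f y) a ≤ dist y a) (hP : ∀ᶠ y in 𝓝 a, P y) :
    ∀ᶠ x in 𝓝 a, ∀ i, P (f^[i] x) := by
  obtain ⟨ε, hε, hball⟩ := Metric.eventually_nhds_iff_ball.1 (hf.and hP)
  have hmaps : Set.MapsTo f (Metric.ball a ε) (Metric.ball a ε) := fun y hy =>
    (hball y hy).1.trans_lt hy
  filter_upwards [Metric.ball_mem_nhds a hε] with x hx i
  exact (hball _ (hmaps.iterate i hx)).2

theorem tendsto_dist_self (a : X) : Tendsto (fun y => dist y a) (𝓝 a) (𝓝 0) :=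
  tendsto_iff_dist_tendsto_zero.1 tendsto_id

theorem eventually_dist_le_of_isBigO_sq
    (hf : (fun y => dist (f y) a) =O[𝓝 a] fun y => dist y a ^ 2) :
    ∀ᶠ y in 𝓝 a, dist (f y) a ≤ dist y a := by
  have hsq : (fun y => dist y a ^ 2) =o[𝓝 a] fun y => dist y a := by
    simpa only [Function.comp_def, pow_one] using
      (isLittleO_pow_pow one_lt_two).comp_tendsto (tendsto_dist_self a)
  simpa using (hf.trans_isLittleO hsq).bound one_pos

theorem eventually_dist_iterate_le_pow_two_pow
    (hf : (fun y => dist (f y) a) =O[𝓝 a] fun y => dist y a ^ 2) {ρ : ℝ} (hρ : 0 < ρ) :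
    ∀ᶠ x in 𝓝 a, ∀ i, dist (f^[i] x) a ≤ ρ ^ 2 ^ i := by
  obtain ⟨C, hC, hquad⟩ :=
    ((eventually_ge_atTop 1).and (isBigO_iff_eventually.1 hf)).exists
  have hsmall : ∀ᶠ y in 𝓝 a, C * dist y a < ρ := by
    have : Tendsto (fun y => C * dist y a) (𝓝 a) (𝓝 0) := by
      simpa using (tendsto_dist_self a).const_mul C
    exact this.eventually_lt_const hρ
  filter_upwards [hsmall, eventually_forall_iterate_of_eventually_dist_le
    (eventually_dist_le_of_isBigO_sq hf) hquad] with x hx hstep i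
  -- Multiplying the error by `C` absorbs the constant of the quadratic bound.
  have hscaled : C * dist (f^[i] x) a ≤ ρ ^ 2 ^ i := by
    induction i with
    | zero => simpa using hx.le
    | succ i ih =>
      calc C * dist (f^[i + 1] x) a ≤ C * (C * dist (f^[i] x) a ^ 2) := by
            rw [Function.iterate_succ_apply']
            gcongr
            simpa using hstep i
        _ = (C * dist (f^[i] x) a) ^ 2 := by ring
        _ ≤ (ρ ^ 2 ^ i) ^ 2 := by gcongr
        _ = ρ ^ 2 ^ (i + 1) := by rw [← pow_mul, pow_succ]
  exact (le_mul_of_one_le_left dist_nonneg hC).trans hscaled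

end Iteration

section NewtonMap

variable {R 𝕜 : Type*} [CommRing R]

theorem newtonMap_eq_sub_div [Field 𝕜] [Algebra R 𝕜] (p : R[X]) (y : 𝕜) :
    p.newtonMap y = y - aeval y p / aeval y (derivative p) := by
  rw [newtonMap_apply, Ring.inverse_eq_inv', div_eq_inv_mul]

theorem newton_seq_eq_iterate [Field 𝕜] [Algebra R 𝕜] {p : R[X]} {x : ℕ → 𝕜}
    (hx : ∀ i, x (i + 1) = x i - aeval (x i) p / aeval (x i) (derivative p)) (i : ℕ) :
    x i = p.newtonMap^[i] (x 0) := by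
  induction i with
  | zero => rfl
  | succ i ih => rw [hx, Function.iterate_succ_apply', ← ih, newtonMap_eq_sub_div]

variable [NormedField 𝕜] [Algebra R 𝕜] {p : R[X]} {α : 𝕜}

theorem eventually_aeval_ne_zero (hp : aeval α p ≠ 0) : ∀ᶠ y in 𝓝 α, aeval y p ≠ 0 := by
  simp only [← eval_map_algebraMap] at hp ⊢
  exact (Polynomial.continuous _).continuousAt.eventually_ne hp

theorem isBigO_newtonMap_sub (hroot : aeval α p = 0) (hp' : aeval α (derivative p) ≠ 0) :
    (fun y => p.newtonMap y - α) =O[𝓝 α] fun y => (y - α) ^ 2 := by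
  obtain ⟨g, hg⟩ : X - C α ∣ p.map (algebraMap R 𝕜) :=
    dvd_iff_isRoot.2 (by rwa [IsRoot, eval_map_algebraMap])
  have haeval (y : 𝕜) : aeval y p = (y - α) * g.eval y := by
    rw [← eval_map_algebraMap, hg]
    simp
  have haeval' (y : 𝕜) :
      aeval y (derivative p) = g.eval y + (y - α) * (derivative g).eval y := by
    rw [← eval_map_algebraMap, ← derivative_map, hg]
    simp
  have herror : ∀ᶠ y in 𝓝 α, (derivative g).eval y / aeval y (derivative p) * (y - α) ^ 2 =
      p.newtonMap y - α := by
    filter_upwards [eventually_aeval_ne_zero hp'] with y hy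
    rw [newtonMap_eq_sub_div]
    field_simp
    rw [haeval, haeval']
    ring
  have hbounded : (fun y => (derivative g).eval y / aeval y (derivative p)) =O[𝓝 α]
      fun _ => (1 : 𝕜) := by
    have hcont : ContinuousAt (fun y => (derivative g).eval y / aeval y (derivative p)) α := by
      simp only [← eval_map_algebraMap] at hp' ⊢
      exact (Polynomial.continuousAt _).div (Polynomial.continuousAt _) hp'
    exact hcont.isBigO_one 𝕜
  simpa only [one_mul] using (hbounded.mul (isBigO_refl _ _)).congr' herror .rfl

theorem isBigO_dist_newtonMap (hroot : aeval α p = 0) (hp' : aeval α (derivative p) ≠ 0) :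
    (fun y => dist (p.newtonMap y) α) =O[𝓝 α] fun y => dist y α ^ 2 := by
  simpa only [dist_eq_norm, norm_pow] using (isBigO_newtonMap_sub hroot hp').norm_norm

theorem eventually_forall_aeval_derivative_iterate_newtonMap_ne_zero
    (hroot : aeval α p = 0) (hp' : aeval α (derivative p) ≠ 0) :
    ∀ᶠ x in 𝓝 α, ∀ i, aeval (p.newtonMap^[i] x) (derivative p) ≠ 0 :=
  eventually_forall_iterate_of_eventually_dist_le
    (eventually_dist_le_of_isBigO_sq (isBigO_dist_newtonMap hroot hp'))
    (eventually_aeval_ne_zero hp')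

end NewtonMap

section Digits

theorem floor_eq_floor_of_forall_abs_sub_lt {K : Type*} [Ring K] [LinearOrder K]
    [IsStrictOrderedRing K] [FloorRing K] {x y : K} (h : ∀ m : ℤ, |x - y| < |y - m|) :
    ⌊x⌋ = ⌊y⌋ := by
  have hlower := h ⌊y⌋
  have hupper := h (⌊y⌋ + 1)
  rw [abs_of_nonneg (sub_nonneg.2 (Int.floor_le y))] at hlower
  rw [abs_sub_comm y, Int.cast_add, Int.cast_one,
    abs_of_pos (sub_pos.2 (Int.lt_floor_add_one y))] at hupper
  rw [Int.floor_eq_iff]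
  constructor
  · simpa only [neg_sub, sub_le_sub_iff_right] using (neg_lt_of_abs_lt hlower).le
  · simpa only [sub_lt_sub_iff_right] using lt_of_abs_lt hupper

theorem exists_pos_floor_mul_eq_of_irrational_root {p : ℤ[X]} (hp : p ≠ 0) {α : ℝ}
    (hirr : Irrational α) (hroot : aeval α p = 0) :
    ∃ c > 0, ∀ (b : ℕ) (x : ℝ), (b : ℝ) ^ p.natDegree * |x - α| < c → ⌊b * x⌋ = ⌊b * α⌋ := by
  obtain ⟨A, hA, hliouville⟩ := Liouville.exists_pos_real_of_irrational_root hirr hp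
    (by rwa [eval_map_algebraMap])
  refine ⟨A⁻¹, inv_pos.2 hA, fun b x hx => ?_⟩
  obtain _ | k := b
  · simp
  have hb : (0 : ℝ) < (k + 1 : ℕ) := by positivity
  have hdist (m : ℤ) : |x - α| < |α - m / (k + 1 : ℕ)| := by
    have hm : A⁻¹ ≤ ((k + 1 : ℕ) : ℝ) ^ p.natDegree * |α - m / (k + 1 : ℕ)| := by
      rw [inv_le_iff_one_le_mul₀ hA, mul_assoc]
      simpa using hliouville m k
    exact lt_of_mul_lt_mul_left (hx.trans_le hm) (by positivity)
  refine floor_eq_floor_of_forall_abs_sub_lt fun m => ?_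
  calc |(k + 1 : ℕ) * x - (k + 1 : ℕ) * α| = (k + 1 : ℕ) * |x - α| := by
        rw [← mul_sub, abs_mul, abs_of_pos hb]
    _ < (k + 1 : ℕ) * |α - m / (k + 1 : ℕ)| := by gcongr; exact hdist m
    _ = |(k + 1 : ℕ) * α - m| := by
        rw [← abs_of_pos hb, ← abs_mul, abs_of_pos hb, mul_sub, mul_div_cancel₀ _ hb.ne']

theorem rpow_le_pow_ceil_mul_logb {b x : ℝ} (hb : 1 < b) (hx : 0 < x) (y : ℝ) :
    x ^ y ≤ b ^ ⌈y * Real.logb b x⌉₊ := by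
  have hb₀ : 0 < b := one_pos.trans hb
  calc x ^ y = b ^ (y * Real.logb b x) := by
        rw [mul_comm, Real.rpow_mul hb₀.le, Real.rpow_logb hb₀ hb.ne' hx]
    _ ≤ b ^ (⌈y * Real.logb b x⌉₊ : ℝ) :=
        Real.rpow_le_rpow_of_exponent_le hb.le (Nat.le_ceil _)
    _ = b ^ ⌈y * Real.logb b x⌉₊ := Real.rpow_natCast _ _

theorem one_add_mul_le_two_pow_ceil_mul_logb (n d : ℕ) :
    1 + n * d ≤ 2 ^ ⌈d * Real.logb 2 (n + 1)⌉₊ := by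
  have hbernoulli : 1 + n * d ≤ (n + 1) ^ d := by
    simpa [mul_comm, add_comm] using
      one_add_mul_le_pow_of_sq_nonneg (a := n) zero_le zero_le zero_le d
  have hlog : ((n : ℝ) + 1) ^ d ≤ 2 ^ ⌈d * Real.logb 2 (n + 1)⌉₊ := by
    simpa using rpow_le_pow_ceil_mul_logb one_lt_two n.cast_add_one_pos d
  exact hbernoulli.trans (mod_cast hlog)

theorem eventually_floor_pow_mul_iterate_newtonMap_eq {p : ℤ[X]} {α : ℝ} (hirr : Irrational α)
    (hroot : aeval α p = 0) (hp' : aeval α (derivative p) ≠ 0) {b : ℕ} (hb : 0 < b) :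
    ∀ᶠ x in 𝓝 α, ∀ n : ℕ,
      ⌊(b : ℝ) ^ n * p.newtonMap^[⌈p.natDegree * Real.logb 2 (n + 1)⌉₊] x⌋ =
        ⌊(b : ℝ) ^ n * α⌋ := by
  have hp : p ≠ 0 := by
    rintro rfl
    simp at hp'
  obtain ⟨c, hc, hfloor⟩ := exists_pos_floor_mul_eq_of_irrational_root hp hirr hroot
  have hb₁ : (1 : ℝ) ≤ b := mod_cast hb
  obtain ⟨ρ, hρ, hρ_lt⟩ : ∃ ρ, 0 < ρ ∧ ρ < min c (b : ℝ)⁻¹ := exists_between (by positivity)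
  obtain ⟨hρc, hρb⟩ := lt_min_iff.1 hρ_lt
  have hρ₁ : ρ ≤ 1 := hρb.le.trans (inv_le_one_of_one_le₀ hb₁)
  have hbρ : b * ρ ≤ 1 := (mul_le_mul_of_nonneg_left hρb.le (by positivity)).trans
    mul_inv_le_one
  filter_upwards [eventually_dist_iterate_le_pow_two_pow (isBigO_dist_newtonMap hroot hp') hρ]
    with x hx n
  set d := p.natDegree
  set i := ⌈d * Real.logb 2 (n + 1)⌉₊
  suffices ((b ^ n : ℕ) : ℝ) ^ d * |p.newtonMap^[i] x - α| < c by
    simpa only [Nat.cast_pow] using hfloor (b ^ n) _ this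
  calc ((b ^ n : ℕ) : ℝ) ^ d * |p.newtonMap^[i] x - α| ≤ ((b ^ n : ℕ) : ℝ) ^ d * ρ ^ 2 ^ i := by
        gcongr
        exact hx i
    _ ≤ ((b ^ n : ℕ) : ℝ) ^ d * ρ ^ (1 + n * d) := by
        gcongr ?_ * ?_
        exact pow_le_pow_of_le_one hρ.le hρ₁ (one_add_mul_le_two_pow_ceil_mul_logb n d)
    _ = ρ * (b * ρ) ^ (n * d) := by
        push_cast
        ring
    _ ≤ ρ := mul_le_of_le_one_right hρ.le (pow_le_one₀ (by positivity) hbρ)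
    _ < c := hρc

end Digits

theorem stmt_10_general {p : ℤ[X]} {α : ℝ} (hirr : Irrational α) (hroot : aeval α p = 0)
    (hp' : aeval α (derivative p) ≠ 0) {b : ℕ} (hb : 0 < b) :
    ∀ᶠ x₀ in 𝓝 α, ∀ x : ℕ → ℝ, x 0 = x₀ →
      (∀ i, x (i + 1) = x i - aeval (x i) p / aeval (x i) (derivative p)) →
      (∀ i, aeval (x i) (derivative p) ≠ 0) ∧
      ∀ n : ℕ, ⌊(b : ℝ) ^ n * x ⌈p.natDegree * Real.logb 2 (n + 1)⌉₊⌋ = ⌊(b : ℝ) ^ n * α⌋ := by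
  filter_upwards [eventually_forall_aeval_derivative_iterate_newtonMap_ne_zero hroot hp',
    eventually_floor_pow_mul_iterate_newtonMap_eq hirr hroot hp' hb]
    with x₀ hderiv hfloor x hx hstep
  have hiterate (i : ℕ) : x i = p.newtonMap^[i] x₀ := hx ▸ newton_seq_eq_iterate hstep i
  exact ⟨fun i => hiterate i ▸ hderiv i, fun n => hiterate _ ▸ hfloor n⟩

/-- Let `p` be a nonzero integer polynomial and `α` an irrational real with
`p(α) = 0`, `p'(α) ≠ 0`, `p''(α) ≠ 0`. Then there are a rational starting point `x₀` and a
constant `K > 0` such that the Newton–Raphson sequence `x_{i+1} = x_i − p(x_i)/p'(x_i)`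
starting at `x₀` is well defined for all `i`, and for every `n ≥ 1`, with
`i(n) = ⌈K·log₂(n+1)⌉`, one has `⌊2^n · x_{i(n)}⌋ = ⌊2^n · α⌋` (so the `n`-th bit of the
rational `x_{i(n)}` equals the `n`-th bit of `α`). -/
theorem stmt_10 (p : Polynomial ℤ) (hp : p ≠ 0) (α : ℝ) (hirr : Irrational α)
    (hroot : Polynomial.aeval α p = 0)
    (hp' : Polynomial.aeval α (Polynomial.derivative p) ≠ 0)
    (hp'' : Polynomial.aeval α (Polynomial.derivative (Polynomial.derivative p)) ≠ 0) :
    ∃ (x₀ : ℚ) (K : ℝ), 0 < K ∧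
      ∀ x : ℕ → ℝ, x 0 = (x₀ : ℝ) →
        (∀ i, x (i + 1) = x i -
          Polynomial.aeval (x i) p / Polynomial.aeval (x i) (Polynomial.derivative p)) →
        (∀ i, Polynomial.aeval (x i) (Polynomial.derivative p) ≠ 0) ∧
        ∀ n : ℕ, 1 ≤ n →
          ⌊(2 : ℝ) ^ n * x ⌈K * Real.logb 2 ((n : ℝ) + 1)⌉₊⌋ = ⌊(2 : ℝ) ^ n * α⌋ := by
  have hdeg : 0 < p.natDegree :=
    Nat.pos_of_ne_zero fun h => hp' (by rw [derivative_of_natDegree_zero h, map_zero])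
  obtain ⟨x₀, hx₀⟩ := Rat.denseRange_cast.mem_nhds (stmt_10_general hirr hroot hp' two_pos)
  exact ⟨x₀, p.natDegree, mod_cast hdeg, fun x hx hstep =>
    (hx₀ x hx hstep).imp_right fun hfloor n _ => hfloor n⟩
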